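/- Let T > 0, (ε_n) a sequence of positive reals tending to 0, and (ω_n) a sequence in W^{1,∞}(0,T;ℝ) such that ε_n ω_n converges weakly-* in W^{1,∞}(0,T;ℝ) to some ρ̄. Let (w_n) in L^∞(0,T;ℂ) converge (strongly in L^∞) to some w. Set θ_n(t) = ∫₀^t ω_n. Suppose that on (0,T), ε_n ω_n'(t) = Re[w_n(t) exp(−i θ_n(t))] for each n. Then ρ̄ is constant on [0,T]. -/

import Mathlib

open MeasureTheory intervalIntegral Complex

/-!
Write `f_n = ε_n ω_n'`. Near a time where `ρ ≠ 0` the frequencies `ω_n` are of size `1 / ε_n`, so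
`cos (φ - θ_n)` tends weakly to zero against every integrable weight
(`tendsto_integral_mul_cos_sub`), for any fixed continuous `φ`. The limit `ρ'` is shown to vanish
there as follows.

Up to a uniformly small error, `f_j = Re (w e^{-iθ_j})` lies in the two-dimensional space spanned
by `cos θ_j` and `sin θ_j` with coefficients independent of `j`. Eliminating the coefficients
between three indices gives (`triple_relation`)
`f_n sin (θ_m - θ_k) + f_m sin (θ_k - θ_n) + f_k sin (θ_n - θ_m) ≈ 0`.
This relation no longer contains `w`, so neither measurability nor boundedness of `w` is needed.
Test it against `ρ' sin (θ_m - θ_k)` and let `n → ∞` with `m, k` fixed: `f_n` tends weakly to `ρ'`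
and the last two terms are fast oscillations, so `∫ ρ'² sin² (θ_m - θ_k) ≈ 0`. Then let `m → ∞`:
`sin² (θ_m - θ_k)` tends weakly to `1 / 2`, so `∫ ρ'² = 0` (`integral_deriv_sq_eq_zero`).

Thus `ρ ρ' = 0` on `(0, T)`, so `ρ²` is constant; if `ρ` is not identically zero it never
vanishes, hence `ρ' = 0` throughout.

Both weak limits rest on `tendsto_integral_mul_deriv`: if `u_n → 0` boundedly and `u_n'` is
bounded, then `u_n'` tends weakly to zero.
-/

section Averaging

open Set Filter Topology

/-! ### Weak convergence of derivatives -/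

/-- Measurability of `u'` comes for free from its being a derivative. -/
lemma intervalIntegrable_deriv_of_bdd {a b : ℝ} (hab : a ≤ b) {u u' : ℝ → ℝ} {K : ℝ}
    (hd : ∀ t ∈ Icc a b, HasDerivAt u (u' t) t) (hK : ∀ t ∈ Icc a b, |u' t| ≤ K) :
    IntervalIntegrable u' volume a b := by
  rw [intervalIntegrable_iff_integrableOn_Icc_of_le hab]
  have h1 : AEStronglyMeasurable u' (volume.restrict (Icc a b)) := by
    refine ((stronglyMeasurable_deriv u).aestronglyMeasurable).congr ?_
    filter_upwards [ae_restrict_mem measurableSet_Icc] with t ht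
    exact (hd t ht).deriv
  refine Integrable.of_bound h1 K ?_
  filter_upwards [ae_restrict_mem measurableSet_Icc] with t ht
  exact hK t ht

lemma intervalIntegrable_mul_bdd {a b : ℝ} (hab : a ≤ b) {h g : ℝ → ℝ} {K : ℝ}
    (hh : IntervalIntegrable h volume a b) (hg : IntervalIntegrable g volume a b)
    (hK : ∀ t ∈ Icc a b, |g t| ≤ K) :
    IntervalIntegrable (fun t => h t * g t) volume a b := by
  rw [intervalIntegrable_iff_integrableOn_Icc_of_le hab] at *
  refine Integrable.mul_bdd (c := K) hh hg.aestronglyMeasurable ?_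
  filter_upwards [ae_restrict_mem measurableSet_Icc] with t ht
  exact hK t ht

/-- If `u_n → 0` pointwise and boundedly with bounded derivatives, then `u_n'` tends to zero weakly
against integrable weights. For smooth weights this is integration by parts; the general case
follows by density in `L¹`. -/
lemma tendsto_integral_mul_deriv {a b : ℝ} (hab : a ≤ b) {u u' : ℕ → ℝ → ℝ} {K B : ℝ}
    (hd : ∀ᶠ n in atTop, ∀ t ∈ Icc a b, HasDerivAt (u n) (u' n t) t)
    (hK : ∀ᶠ n in atTop, ∀ t ∈ Icc a b, |u' n t| ≤ K)
    (hB : ∀ᶠ n in atTop, ∀ t ∈ Icc a b, |u n t| ≤ B)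
    (hlim : ∀ t ∈ Icc a b, Tendsto (fun n => u n t) atTop (𝓝 0))
    {h : ℝ → ℝ} (hh : IntervalIntegrable h volume a b) :
    Tendsto (fun n => ∫ t in a..b, h t * u' n t) atTop (𝓝 0) := by
  have hK0 : 0 ≤ K := by
    obtain ⟨n, hn⟩ := hK.exists
    exact (abs_nonneg _).trans (hn a ⟨le_rfl, hab⟩)
  -- smooth weights: integrate by parts
  have smooth : ∀ g : ℝ → ℝ, ContDiff ℝ 1 g →
      Tendsto (fun n => ∫ t in a..b, g t * u' n t) atTop (𝓝 0) := by
    intro g hg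
    have hg' : Continuous (deriv g) := hg.continuous_deriv le_rfl
    have e : ∀ᶠ n in atTop, g b * u n b - g a * u n a - ∫ t in a..b, deriv g t * u n t
        = ∫ t in a..b, g t * u' n t := by
      filter_upwards [hd, hK] with n hn hn'
      refine (integral_mul_deriv_eq_deriv_mul ?_ ?_ (hg'.intervalIntegrable _ _)
        (intervalIntegrable_deriv_of_bdd hab hn hn')).symm
      · intro x _
        exact (hg.differentiable one_ne_zero x).hasDerivAt
      · rwa [uIcc_of_le hab]
    refine Tendsto.congr' e ?_
    have i : Tendsto (fun n => ∫ t in a..b, deriv g t * u n t) atTop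
        (𝓝 (∫ t in a..b, (0:ℝ))) := by
      refine tendsto_integral_filter_of_dominated_convergence (fun t => |deriv g t| * B)
        ?_ ?_ ((hg'.abs.mul continuous_const).intervalIntegrable _ _) ?_
      · filter_upwards [hd] with n hn
        rw [uIoc_of_le hab]
        refine (ContinuousOn.aestronglyMeasurable ?_ measurableSet_Icc).mono_measure
          (Measure.restrict_mono_set _ Ioc_subset_Icc_self)
        exact hg'.continuousOn.mul fun t ht => (hn t ht).continuousAt.continuousWithinAt
      · filter_upwards [hB] with n hn
        refine Eventually.of_forall fun t ht => ?_
        rw [uIoc_of_le hab] at ht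
        rw [norm_mul]
        exact mul_le_mul_of_nonneg_left (hn t (Ioc_subset_Icc_self ht)) (norm_nonneg _)
      · refine Eventually.of_forall fun t ht => ?_
        rw [uIoc_of_le hab] at ht
        simpa using (hlim t (Ioc_subset_Icc_self ht)).const_mul (deriv g t)
    have := (((hlim b ⟨hab, le_rfl⟩).const_mul (g b)).sub
      ((hlim a ⟨le_rfl, hab⟩).const_mul (g a))).sub i
    simpa using this
  rw [Metric.tendsto_nhds]
  intro η hη
  have hhI := (intervalIntegrable_iff_integrableOn_Ioc_of_le hab).1 hh
  -- `K + 1` rather than `K`, which may be zero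
  have hδ : 0 < η / (2 * (K + 1)) := by positivity
  obtain ⟨g, -, hg, hgd⟩ := MemLp.exist_eLpNorm_sub_le (p := 1) (by simp) le_rfl
    (memLp_one_iff_integrable.2 hhI) hδ
  have hgi : IntervalIntegrable g volume a b := hg.continuous.intervalIntegrable _ _
  have hdiff : ∫ t in a..b, |h t - g t| ≤ η / (2 * (K + 1)) := by
    rw [integral_of_le hab]
    have hi : Integrable (h - g) (volume.restrict (Ioc a b)) :=
      hhI.sub ((intervalIntegrable_iff_integrableOn_Ioc_of_le hab).1 hgi)
    rw [eLpNorm_one_eq_lintegral_enorm, ← ofReal_integral_norm_eq_lintegral_enorm hi] at hgd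
    exact (ENNReal.ofReal_le_ofReal_iff hδ.le).1 hgd
  filter_upwards [hd, hK, (Metric.tendsto_nhds.1 (smooth g (hg.of_le (by simp)))) (η / 2)
    (by positivity)] with n hn hn' hs
  have hui := intervalIntegrable_deriv_of_bdd hab hn hn'
  rw [Real.dist_eq, sub_zero] at hs ⊢
  have hsplit : ∫ t in a..b, h t * u' n t
      = (∫ t in a..b, (h t - g t) * u' n t) + ∫ t in a..b, g t * u' n t := by
    rw [← integral_add (intervalIntegrable_mul_bdd hab (hh.sub hgi) hui hn')
      (intervalIntegrable_mul_bdd hab hgi hui hn')]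
    congr 1; ext t; ring
  have hsmall : |∫ t in a..b, (h t - g t) * u' n t| ≤ ∫ t in a..b, |h t - g t| * K := by
    rw [← Real.norm_eq_abs]
    refine norm_integral_le_of_norm_le hab (Eventually.of_forall fun t ht => ?_)
      ((hh.sub hgi).abs.mul_const K)
    rw [norm_mul]
    exact mul_le_mul_of_nonneg_left (hn' t (Ioc_subset_Icc_self ht)) (norm_nonneg _)
  rw [intervalIntegral.integral_mul_const] at hsmall
  have : η / (2 * (K + 1)) * K ≤ η / 2 := by
    rw [div_mul_eq_mul_div, div_le_div_iff₀ (by positivity) (by positivity)]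
    nlinarith
  rw [hsplit]
  refine (abs_add_le _ _).trans_lt ?_
  have := mul_le_mul_of_nonneg_right hdiff hK0
  linarith

/-! ### From weak to pointwise convergence -/

/-- Weak convergence of equi-Lipschitz functions is pointwise: test against a narrow tent function
centred at `s`. -/
lemma tendsto_of_weak_of_lipschitz {T C : ℝ} (hT : 0 < T) {v : ℕ → ℝ → ℝ} {ρ : ℝ → ℝ}
    (hv : ∀ n, Continuous (v n)) (hρ : Continuous ρ)
    (hL : ∀ n, ∀ s ∈ Icc 0 T, ∀ t ∈ Icc 0 T, |v n t - v n s| ≤ C * |t - s|)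
    (hweak : ∀ g : ℝ → ℝ, Continuous g → Tendsto (fun n => ∫ t in (0:ℝ)..T, g t * v n t)
      atTop (𝓝 (∫ t in (0:ℝ)..T, g t * ρ t)))
    {s : ℝ} (hs : s ∈ Icc 0 T) : Tendsto (fun n => v n s) atTop (𝓝 (ρ s)) := by
  have hC : 0 ≤ C := by
    have := (abs_nonneg _).trans (hL 0 0 ⟨le_rfl, hT.le⟩ T ⟨hT.le, le_rfl⟩)
    rw [sub_zero, abs_of_pos hT] at this
    exact nonneg_of_mul_nonneg_left this hT
  rw [Metric.tendsto_nhds]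
  intro η hη
  obtain ⟨r₀, hr₀, hr₀'⟩ := Metric.continuous_iff.1 hρ s (η / 4) (by positivity)
  obtain ⟨r, hr, hrr₀, hrC⟩ : ∃ r > 0, r ≤ r₀ ∧ C * r ≤ η / 4 := by
    refine ⟨min r₀ (η / (4 * (C + 1))), by positivity, min_le_left _ _, ?_⟩
    calc C * min r₀ (η / (4 * (C + 1))) ≤ C * (η / (4 * (C + 1))) :=
          mul_le_mul_of_nonneg_left (min_le_right _ _) hC
      _ ≤ η / 4 := by
          rw [mul_div_assoc', div_le_div_iff₀ (by positivity) (by positivity)]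
          nlinarith
  set g : ℝ → ℝ := fun t => max 0 (r - |t - s|) with hg
  have hgc : Continuous g := by fun_prop
  have hg0 : ∀ t, 0 ≤ g t := fun t => le_max_left _ _
  have hgr : ∀ t, g t ≠ 0 → |t - s| < r := by
    intro t ht
    by_contra! hc
    exact ht (max_eq_left (by linarith))
  set M := ∫ t in (0:ℝ)..T, g t with hM
  have hMpos : 0 < M := by
    refine intervalIntegral.integral_pos hT hgc.continuousOn (fun t _ => hg0 t) ⟨s, hs, ?_⟩
    simp [hg, hr]
  have key : ∀ f : ℝ → ℝ, Continuous f →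
      (∀ t ∈ Icc 0 T, |t - s| < r → |f t - f s| ≤ η / 4) →
      |(∫ t in (0:ℝ)..T, g t * f t) - M * f s| ≤ M * (η / 4) := by
    intro f hf hfs
    rw [hM, ← intervalIntegral.integral_mul_const, ← intervalIntegral.integral_mul_const, ← integral_sub
      (Continuous.intervalIntegrable (by fun_prop) _ _)
      (Continuous.intervalIntegrable (by fun_prop) _ _)]
    rw [← Real.norm_eq_abs]
    refine norm_integral_le_of_norm_le hT.le (Eventually.of_forall fun t ht => ?_)
      ((hgc.intervalIntegrable _ _).mul_const _)
    rw [← mul_sub, norm_mul, Real.norm_of_nonneg (hg0 t)]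
    by_cases h0 : g t = 0
    · simp [h0]
    · exact mul_le_mul_of_nonneg_left (hfs t (Ioc_subset_Icc_self ht) (hgr t h0)) (hg0 t)
  have kρ := key ρ hρ fun t _ ht => (hr₀' t (ht.trans_le hrr₀)).le
  filter_upwards [Metric.tendsto_nhds.1 (hweak g hgc) (M * (η / 4)) (by positivity)] with n hn
  have kn := key (v n) (hv n) fun t ht htr =>
    (hL n s hs t ht).trans ((mul_le_mul_of_nonneg_left htr.le hC).trans hrC)
  rw [Real.dist_eq] at hn ⊢
  refine lt_of_mul_lt_mul_left ?_ hMpos.le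
  rw [← abs_of_pos hMpos, ← abs_mul, abs_of_pos hMpos]
  rw [abs_le] at kρ kn
  rw [abs_lt] at hn ⊢
  constructor <;> nlinarith [mul_pos hMpos hη]

/-! ### Fast oscillations -/

/-- Nonlinear Riemann–Lebesgue lemma: `cos (θ_n + α)` differs from the derivative of
`sin (θ_n + α) / ω_n`, which is `O(ε_n)`, by `sin (θ_n + α) ω_n' / ω_n² = O(ε_n)`. -/
lemma tendsto_integral_mul_cos {a b : ℝ} (hab : a ≤ b) {ε : ℕ → ℝ} (hε : ∀ n, 0 < ε n)
    (hε0 : Tendsto ε atTop (𝓝 0)) {θ ω ωd : ℕ → ℝ → ℝ} {A C : ℝ} (hA : 0 < A)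
    (hθ : ∀ n t, HasDerivAt (θ n) (ω n t) t) (hω : ∀ n t, HasDerivAt (ω n) (ωd n t) t)
    (hlow : ∀ᶠ n in atTop, ∀ t ∈ Icc a b, A ≤ |ε n * ω n t|)
    (hC : ∀ᶠ n in atTop, ∀ t ∈ Icc a b, |ε n * ωd n t| ≤ C) (α : ℝ)
    {h : ℝ → ℝ} (hh : IntervalIntegrable h volume a b) :
    Tendsto (fun n => ∫ t in a..b, h t * Real.cos (θ n t + α)) atTop (𝓝 0) := by
  set u : ℕ → ℝ → ℝ := fun n t => Real.sin (θ n t + α) / ω n t with hu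
  set v : ℕ → ℝ → ℝ := fun n t => Real.sin (θ n t + α) * ωd n t / ω n t ^ 2 with hv
  have hC0 : 0 ≤ C := by
    obtain ⟨n, hn⟩ := hC.exists
    exact (abs_nonneg _).trans (hn a ⟨le_rfl, hab⟩)
  have hlow' : ∀ᶠ n in atTop, ∀ t ∈ Icc a b, A / ε n ≤ |ω n t| := by
    filter_upwards [hlow] with n hn t ht
    rw [div_le_iff₀ (hε n)]
    have := hn t ht
    rwa [abs_mul, abs_of_pos (hε n), mul_comm] at this
  have hne : ∀ᶠ n in atTop, ∀ t ∈ Icc a b, ω n t ≠ 0 := by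
    filter_upwards [hlow'] with n hn t ht
    exact abs_pos.1 ((div_pos hA (hε n)).trans_le (hn t ht))
  have hub : ∀ᶠ n in atTop, ∀ t ∈ Icc a b, |u n t| ≤ ε n / A := by
    filter_upwards [hlow'] with n hn t ht
    rw [hu, abs_div]
    calc _ ≤ 1 / (A / ε n) :=
          div_le_div₀ zero_le_one (Real.abs_sin_le_one _) (div_pos hA (hε n)) (hn t ht)
      _ = ε n / A := by rw [one_div_div]
  have hvb : ∀ᶠ n in atTop, ∀ t ∈ Icc a b, |v n t| ≤ C / A ^ 2 * ε n := by
    filter_upwards [hlow', hC] with n hn hn' t ht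
    have h1 : |ωd n t| ≤ C / ε n := by
      rw [le_div_iff₀ (hε n)]
      have := hn' t ht
      rwa [abs_mul, abs_of_pos (hε n), mul_comm] at this
    have h2 : (A / ε n) ^ 2 ≤ |ω n t ^ 2| := by
      rw [abs_pow]
      exact pow_le_pow_left₀ (div_pos hA (hε n)).le (hn t ht) 2
    rw [hv, abs_div, abs_mul]
    have h3 : |Real.sin (θ n t + α)| * |ωd n t| ≤ C / ε n := by
      have := mul_le_mul (Real.abs_sin_le_one (θ n t + α)) h1 (abs_nonneg _) zero_le_one
      rwa [one_mul] at this
    have hp := div_pos hA (hε n)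
    calc _ ≤ (C / ε n) / (A / ε n) ^ 2 :=
          div_le_div₀ (div_nonneg hC0 (hε n).le) h3 (by positivity) h2
      _ = _ := by have := (hε n).ne'; field_simp
  have hε1 : ∀ᶠ n in atTop, ε n ≤ 1 := hε0.eventually_le_const one_pos
  have hder : ∀ᶠ n in atTop, ∀ t ∈ Icc a b,
      HasDerivAt (u n) (Real.cos (θ n t + α) - v n t) t := by
    filter_upwards [hne] with n hn t ht
    have := (((hθ n t).add_const α).sin).div (hω n t) (hn t ht)
    convert! this using 1
    have := hn t ht
    simp only [hv]
    field_simp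
  have hK : ∀ᶠ n in atTop, ∀ t ∈ Icc a b,
      |Real.cos (θ n t + α) - v n t| ≤ 1 + C / A ^ 2 := by
    filter_upwards [hvb, hε1] with n hn h1 t ht
    have h2 := hn t ht
    have h3 : C / A ^ 2 * ε n ≤ C / A ^ 2 := mul_le_of_le_one_right (by positivity) h1
    have := abs_sub (Real.cos (θ n t + α)) (v n t)
    have := Real.abs_cos_le_one (θ n t + α)
    linarith
  have main := tendsto_integral_mul_deriv hab (B := 1 / A) hder hK (by
      filter_upwards [hub, hε1] with n hn h1 t ht
      exact (hn t ht).trans (div_le_div_of_nonneg_right h1 hA.le)) (by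
      intro t ht
      refine squeeze_zero_norm' (a := fun n => ε n / A) ?_ (by simpa using hε0.div_const A)
      filter_upwards [hub] with n hn
      exact hn t ht) hh
  have hcos : ∀ n, IntervalIntegrable (fun t => Real.cos (θ n t + α)) volume a b := fun n =>
    Continuous.intervalIntegrable (Real.continuous_cos.comp
      ((continuous_iff_continuousAt.2 fun t => (hθ n t).continuousAt).add continuous_const)) _ _
  have rest : Tendsto (fun n => (∫ t in a..b, h t * Real.cos (θ n t + α))
      - ∫ t in a..b, h t * (Real.cos (θ n t + α) - v n t)) atTop (𝓝 0) := by
    refine squeeze_zero_norm' (a := fun n => (∫ t in a..b, |h t|) * (C / A ^ 2 * ε n)) ?_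
      (by simpa using (hε0.const_mul (C / A ^ 2)).const_mul (∫ t in a..b, |h t|))
    filter_upwards [hvb, hder, hK] with n hn hd hk
    rw [← integral_sub (intervalIntegrable_mul_bdd hab hh (hcos n)
      fun t _ => Real.abs_cos_le_one _) (intervalIntegrable_mul_bdd hab hh
      (intervalIntegrable_deriv_of_bdd hab hd hk) hk), ← intervalIntegral.integral_mul_const]
    refine norm_integral_le_of_norm_le hab (Eventually.of_forall fun t ht => ?_)
      (hh.abs.mul_const _)
    rw [← mul_sub, sub_sub_cancel, norm_mul]
    exact mul_le_mul_of_nonneg_left (hn t (Ioc_subset_Icc_self ht)) (norm_nonneg _)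
  simpa using rest.add main

/-- The Riemann–Lebesgue lemma with a phase shift `φ` depending on time, by the addition formula. -/
lemma tendsto_integral_mul_cos_sub {a b : ℝ} (hab : a ≤ b) {ε : ℕ → ℝ} (hε : ∀ n, 0 < ε n)
    (hε0 : Tendsto ε atTop (𝓝 0)) {θ ω ωd : ℕ → ℝ → ℝ} {A C : ℝ} (hA : 0 < A)
    (hθ : ∀ n t, HasDerivAt (θ n) (ω n t) t) (hω : ∀ n t, HasDerivAt (ω n) (ωd n t) t)
    (hlow : ∀ᶠ n in atTop, ∀ t ∈ Icc a b, A ≤ |ε n * ω n t|)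
    (hC : ∀ᶠ n in atTop, ∀ t ∈ Icc a b, |ε n * ωd n t| ≤ C) {φ : ℝ → ℝ} (hφ : Continuous φ)
    {h : ℝ → ℝ} (hh : IntervalIntegrable h volume a b) :
    Tendsto (fun n => ∫ t in a..b, h t * Real.cos (φ t - θ n t)) atTop (𝓝 0) := by
  have hc : IntervalIntegrable (fun t => h t * Real.cos (φ t)) volume a b :=
    hh.mul_continuousOn (Real.continuous_cos.comp hφ).continuousOn
  have hs : IntervalIntegrable (fun t => h t * Real.sin (φ t)) volume a b :=
    hh.mul_continuousOn (Real.continuous_sin.comp hφ).continuousOn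
  have hθc : ∀ n, Continuous (θ n) := fun n =>
    continuous_iff_continuousAt.2 fun t => (hθ n t).continuousAt
  have h1 := tendsto_integral_mul_cos hab hε hε0 hA hθ hω hlow hC 0 hc
  have h2 := tendsto_integral_mul_cos hab hε hε0 hA hθ hω hlow hC (-(Real.pi / 2)) hs
  have h3 := h1.add h2
  rw [add_zero] at h3
  refine h3.congr fun n => ?_
  have ic : ∀ c : ℝ, Continuous fun t => Real.cos (θ n t + c) := fun c =>
    Real.continuous_cos.comp ((hθc n).add continuous_const)
  rw [← intervalIntegral.integral_add (hc.mul_continuousOn (ic _).continuousOn)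
    (hs.mul_continuousOn (ic _).continuousOn)]
  refine intervalIntegral.integral_congr fun t _ => ?_
  simp only [add_zero, ← sub_eq_add_neg, Real.cos_sub, Real.cos_pi_div_two,
    Real.sin_pi_div_two]
  ring

/-! ### The three-index argument -/

/-- On an interval where `|ε_n ω_n|` stays away from zero, the three-index relation `hrel` forces the
derivative of the limit to vanish in `L²`. -/
lemma integral_deriv_sq_eq_zero {a b : ℝ} (hab : a ≤ b) {ε : ℕ → ℝ} (hε : ∀ n, 0 < ε n)
    (hε0 : Tendsto ε atTop (𝓝 0)) {θ ω ωd : ℕ → ℝ → ℝ} {A C : ℝ} (hA : 0 < A)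
    (hθ : ∀ n t, HasDerivAt (θ n) (ω n t) t) (hω : ∀ n t, HasDerivAt (ω n) (ωd n t) t)
    (hlow : ∀ᶠ n in atTop, ∀ t ∈ Icc a b, A ≤ |ε n * ω n t|)
    (hC : ∀ n, ∀ t ∈ Icc a b, |ε n * ω n t| ≤ C ∧ |ε n * ωd n t| ≤ C)
    {ρ ρd : ℝ → ℝ} (hρ : ∀ t, HasDerivAt ρ (ρd t) t)
    (hρb : ∀ t ∈ Icc a b, |ρ t| ≤ C ∧ |ρd t| ≤ C)
    (hlim : ∀ t ∈ Icc a b, Tendsto (fun n => ε n * ω n t) atTop (𝓝 (ρ t)))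
    (hrel : ∀ η > 0, ∃ N, ∀ m ≥ N, ∀ k ≥ N, ∀ n ≥ N, ∀ t ∈ Icc a b,
      |ε n * ωd n t * Real.sin (θ m t - θ k t) + ε m * ωd m t * Real.sin (θ k t - θ n t)
        + ε k * ωd k t * Real.sin (θ n t - θ m t)| ≤ η) :
    ∫ t in a..b, ρd t ^ 2 = 0 := by
  have hC0 : 0 ≤ C := (abs_nonneg _).trans (hρb a ⟨le_rfl, hab⟩).1
  have hθc : ∀ n, Continuous (θ n) := fun n =>
    continuous_iff_continuousAt.2 fun t => (hθ n t).continuousAt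
  have iρ : IntervalIntegrable ρd volume a b :=
    intervalIntegrable_deriv_of_bdd hab (fun t _ => hρ t) fun t ht => (hρb t ht).2
  have iρ2 : IntervalIntegrable (fun t => ρd t ^ 2) volume a b := by
    simpa only [sq] using intervalIntegrable_mul_bdd hab iρ iρ fun t ht => (hρb t ht).2
  have iF : ∀ n, IntervalIntegrable (fun t => ε n * ωd n t) volume a b := fun n =>
    intervalIntegrable_deriv_of_bdd hab (fun t _ => (hω n t).const_mul (ε n))
      fun t ht => (hC n t ht).2
  have iS : ∀ m k {h : ℝ → ℝ}, IntervalIntegrable h volume a b →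
      IntervalIntegrable (fun t => h t * Real.sin (θ m t - θ k t)) volume a b :=
    fun m k h hh => hh.mul_continuousOn
      (Real.continuous_sin.comp ((hθc m).sub (hθc k))).continuousOn
  have hC' : ∀ᶠ n in atTop, ∀ t ∈ Icc a b, |ε n * ωd n t| ≤ C :=
    Eventually.of_forall fun n t ht => (hC n t ht).2
  -- the limit `n → ∞` in `hrel` tested against `ρd * sin (θ m - θ k)`
  have step1 : ∀ η > 0, ∃ N, ∀ m ≥ N, ∀ k ≥ N,
      ∫ t in a..b, ρd t ^ 2 * Real.sin (θ m t - θ k t) ^ 2 ≤ C * η * (b - a) := by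
    intro η hη
    obtain ⟨N, hN⟩ := hrel η hη
    refine ⟨N, fun m hm k hk => ?_⟩
    have iρS := iS m k iρ
    have iρSS := iS m k iρS
    have iG : ∀ j, IntervalIntegrable (fun t => ρd t * Real.sin (θ m t - θ k t) *
        (ε j * ωd j t)) volume a b := fun j =>
      intervalIntegrable_mul_bdd hab iρS (iF j) fun t ht => (hC j t ht).2
    have iD : ∀ n, ∀ t ∈ Icc a b, |ε n * ωd n t - ρd t| ≤ C + C := fun n t ht =>
      (abs_sub _ _).trans (add_le_add (hC n t ht).2 (hρb t ht).2)
    have t1 : Tendsto (fun n => ∫ t in a..b,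
        ρd t * Real.sin (θ m t - θ k t) * Real.sin (θ m t - θ k t) * (ε n * ωd n t - ρd t))
        atTop (𝓝 0) := by
      refine tendsto_integral_mul_deriv (u := fun n t => ε n * ω n t - ρ t) (B := C + C) hab
        (Eventually.of_forall fun n t _ => ((hω n t).const_mul (ε n)).sub (hρ t))
        (Eventually.of_forall iD)
        (Eventually.of_forall fun n t ht =>
          (abs_sub _ _).trans (add_le_add (hC n t ht).1 (hρb t ht).1)) (fun t ht => ?_) iρSS
      simpa using (hlim t ht).sub_const (ρ t)
    have t2 := tendsto_integral_mul_cos_sub hab hε hε0 hA hθ hω hlow hC'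
      (φ := fun t => θ k t - Real.pi / 2) ((hθc k).sub continuous_const) (iG m)
    have t3 := tendsto_integral_mul_cos_sub hab hε hε0 hA hθ hω hlow hC'
      (φ := fun t => θ m t + Real.pi / 2) ((hθc m).add continuous_const) (iG k)
    have tot := ((t1.add t2).add t3).add_const
      (∫ t in a..b, ρd t ^ 2 * Real.sin (θ m t - θ k t) ^ 2)
    rw [add_zero, add_zero, zero_add] at tot
    refine le_of_tendsto tot ?_
    filter_upwards [eventually_ge_atTop N] with n hn
    have j1 : IntervalIntegrable (fun t => ρd t * Real.sin (θ m t - θ k t) *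
        Real.sin (θ m t - θ k t) * (ε n * ωd n t - ρd t)) volume a b :=
      intervalIntegrable_mul_bdd hab iρSS ((iF n).sub iρ) (iD n)
    have j2 : IntervalIntegrable (fun t => ρd t * Real.sin (θ m t - θ k t) *
        (ε m * ωd m t) * Real.cos (θ k t - Real.pi / 2 - θ n t)) volume a b :=
      (iG m).mul_continuousOn (Real.continuous_cos.comp
        (((hθc k).sub continuous_const).sub (hθc n))).continuousOn
    have j3 : IntervalIntegrable (fun t => ρd t * Real.sin (θ m t - θ k t) *
        (ε k * ωd k t) * Real.cos (θ m t + Real.pi / 2 - θ n t)) volume a b :=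
      (iG k).mul_continuousOn (Real.continuous_cos.comp
        (((hθc m).add continuous_const).sub (hθc n))).continuousOn
    have j4 : IntervalIntegrable (fun t => ρd t ^ 2 * Real.sin (θ m t - θ k t) ^ 2)
        volume a b := iρ2.mul_continuousOn
      ((Real.continuous_sin.comp ((hθc m).sub (hθc k))).pow 2).continuousOn
    rw [← intervalIntegral.integral_add j1 j2, ← intervalIntegral.integral_add (j1.add j2) j3,
      ← intervalIntegral.integral_add ((j1.add j2).add j3) j4]
    refine (le_abs_self _).trans ?_
    have hb : |b - a| = b - a := abs_of_nonneg (sub_nonneg.2 hab)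
    rw [← Real.norm_eq_abs, ← hb]
    refine norm_integral_le_of_norm_le_const fun t ht => ?_
    rw [uIoc_of_le hab] at ht
    have ht' := Ioc_subset_Icc_self ht
    have e2 : Real.cos (θ k t - Real.pi / 2 - θ n t) = Real.sin (θ k t - θ n t) := by
      rw [← Real.cos_sub_pi_div_two]; ring_nf
    have e3 : Real.cos (θ m t + Real.pi / 2 - θ n t) = Real.sin (θ n t - θ m t) := by
      rw [← Real.cos_sub_pi_div_two, ← Real.cos_neg]; ring_nf
    have hs : |Real.sin (θ m t - θ k t)| ≤ 1 := Real.abs_sin_le_one _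
    have e : ρd t * Real.sin (θ m t - θ k t) * Real.sin (θ m t - θ k t) * (ε n * ωd n t - ρd t)
        + ρd t * Real.sin (θ m t - θ k t) * (ε m * ωd m t) * Real.sin (θ k t - θ n t)
        + ρd t * Real.sin (θ m t - θ k t) * (ε k * ωd k t) * Real.sin (θ n t - θ m t)
        + ρd t ^ 2 * Real.sin (θ m t - θ k t) ^ 2
        = ρd t * Real.sin (θ m t - θ k t) * (ε n * ωd n t * Real.sin (θ m t - θ k t)
          + ε m * ωd m t * Real.sin (θ k t - θ n t)
          + ε k * ωd k t * Real.sin (θ n t - θ m t)) := by ring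
    rw [e2, e3, e, Real.norm_eq_abs, abs_mul, abs_mul]
    refine mul_le_mul ?_ (hN m hm k hk n hn t ht') (abs_nonneg _) hC0
    calc _ ≤ C * 1 := mul_le_mul (hρb t ht').2 hs (abs_nonneg _) hC0
      _ = C := mul_one C
  -- the limit `m → ∞`, using `sin² x = (1 - cos 2x) / 2`
  have step2 : ∀ η > 0, (1 / 2) * ∫ t in a..b, ρd t ^ 2 ≤ C * η * (b - a) := by
    intro η hη
    obtain ⟨N, hN⟩ := step1 η hη
    have t1 := tendsto_integral_mul_cos_sub (θ := fun n t => 2 * θ n t)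
      (ω := fun n t => 2 * ω n t) (ωd := fun n t => 2 * ωd n t) (A := 2 * A) (C := 2 * C)
      hab hε hε0 (by positivity) (fun n t => (hθ n t).const_mul 2)
      (fun n t => (hω n t).const_mul 2) (by
        filter_upwards [hlow] with n hn t ht
        rw [mul_left_comm, abs_mul, abs_two]
        linarith [hn t ht]) (by
        filter_upwards [hC'] with n hn t ht
        rw [mul_left_comm, abs_mul, abs_two]
        linarith [hn t ht]) (φ := fun t => 2 * θ N t) (continuous_const.mul (hθc N)) iρ2
    have t2 := (t1.const_mul (-(1 / 2))).const_add ((1 / 2) * ∫ t in a..b, ρd t ^ 2)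
    rw [mul_zero, add_zero] at t2
    refine le_of_tendsto t2 ?_
    filter_upwards [eventually_ge_atTop N] with m hm
    refine le_trans (le_of_eq ?_) (hN m hm N le_rfl)
    have ic : Continuous fun t => Real.cos (2 * θ N t - 2 * θ m t) :=
      Real.continuous_cos.comp
        ((continuous_const.mul (hθc N)).sub (continuous_const.mul (hθc m)))
    rw [← intervalIntegral.integral_const_mul, ← intervalIntegral.integral_const_mul,
      ← intervalIntegral.integral_add (iρ2.const_mul _)
        ((iρ2.mul_continuousOn ic.continuousOn).const_mul _)]
    refine intervalIntegral.integral_congr fun t _ => ?_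
    have : Real.cos (2 * θ N t - 2 * θ m t) = 1 - 2 * Real.sin (θ m t - θ N t) ^ 2 := by
      rw [← Real.cos_neg, show -(2 * θ N t - 2 * θ m t) = 2 * (θ m t - θ N t) by ring,
        Real.cos_two_mul, Real.cos_sq']
      ring
    simp only [this]
    ring
  have hnn : 0 ≤ ∫ t in a..b, ρd t ^ 2 :=
    intervalIntegral.integral_nonneg hab fun t _ => sq_nonneg _
  refine le_antisymm (le_of_forall_pos_le_add fun δ hδ => ?_) hnn
  have hba : 0 ≤ C * (b - a) := mul_nonneg hC0 (sub_nonneg.2 hab)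
  have := step2 (δ / (2 * (C * (b - a) + 1))) (by positivity)
  have h2 : C * (δ / (2 * (C * (b - a) + 1))) * (b - a) ≤ δ / 2 := by
    rw [show C * (δ / (2 * (C * (b - a) + 1))) * (b - a)
      = (C * (b - a) * δ) / (2 * (C * (b - a) + 1)) by ring,
      div_le_div_iff₀ (by positivity) (by positivity)]
    nlinarith
  linarith

/-- Eliminating `wlim` between three indices. The exact identity is
`Re (z e^{-ip}) sin (q - r) + Re (z e^{-iq}) sin (r - p) + Re (z e^{-ir}) sin (p - q) = 0`. -/
lemma triple_relation {ε : ℕ → ℝ} {ωd θ : ℕ → ℝ → ℝ} {w : ℕ → ℝ → ℂ} {wlim : ℝ → ℂ} {S : Set ℝ}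
    (hw : TendstoUniformlyOn w wlim atTop S)
    (hODE : ∀ n, ∀ t ∈ S, ε n * ωd n t = (w n t * Complex.exp (-Complex.I * (θ n t : ℂ))).re)
    {η : ℝ} (hη : 0 < η) : ∃ N, ∀ m ≥ N, ∀ k ≥ N, ∀ n ≥ N, ∀ t ∈ S,
      |ε n * ωd n t * Real.sin (θ m t - θ k t) + ε m * ωd m t * Real.sin (θ k t - θ n t)
        + ε k * ωd k t * Real.sin (θ n t - θ m t)| ≤ η := by
  obtain ⟨N, hN⟩ := eventually_atTop.1 (Metric.tendstoUniformlyOn_iff.1 hw (η / 3) (by positivity))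
  have herr : ∀ j ≥ N, ∀ t ∈ S, |ε j * ωd j t
      - ((wlim t).re * Real.cos (θ j t) + (wlim t).im * Real.sin (θ j t))| ≤ η / 3 := by
    intro j hj t ht
    have e : Complex.exp (-Complex.I * (θ j t : ℂ)) = ⟨Real.cos (θ j t), -Real.sin (θ j t)⟩ := by
      rw [show -Complex.I * (θ j t : ℂ) = ((-θ j t : ℝ) : ℂ) * Complex.I by push_cast; ring]
      apply Complex.ext
      · rw [Complex.exp_ofReal_mul_I_re, Real.cos_neg]
      · rw [Complex.exp_ofReal_mul_I_im, Real.sin_neg]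
    have e1 : ((wlim t).re * Real.cos (θ j t) + (wlim t).im * Real.sin (θ j t))
        = (wlim t * Complex.exp (-Complex.I * (θ j t : ℂ))).re := by
      rw [e, Complex.mul_re]; ring
    have e2 : ‖Complex.exp (-Complex.I * (θ j t : ℂ))‖ = 1 := by
      rw [show -Complex.I * (θ j t : ℂ) = ((-θ j t : ℝ) : ℂ) * Complex.I by push_cast; ring]
      exact Complex.norm_exp_ofReal_mul_I _
    rw [e1, hODE j t ht, ← Complex.sub_re, ← sub_mul]
    refine (Complex.abs_re_le_norm _).trans ?_
    rw [norm_mul, e2, mul_one, ← dist_eq_norm, dist_comm]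
    exact (hN j hj t ht).le
  refine ⟨N, fun m hm k hk n hn t ht => ?_⟩
  have hb : ∀ j ≥ N, ∀ s : ℝ, |(ε j * ωd j t
      - ((wlim t).re * Real.cos (θ j t) + (wlim t).im * Real.sin (θ j t))) * Real.sin s|
      ≤ η / 3 := by
    intro j hj s
    rw [abs_mul]
    exact (mul_le_of_le_one_right (abs_nonneg _) (Real.abs_sin_le_one s)).trans (herr j hj t ht)
  have e : ε n * ωd n t * Real.sin (θ m t - θ k t) + ε m * ωd m t * Real.sin (θ k t - θ n t)
        + ε k * ωd k t * Real.sin (θ n t - θ m t)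
      = (ε n * ωd n t - ((wlim t).re * Real.cos (θ n t) + (wlim t).im * Real.sin (θ n t)))
          * Real.sin (θ m t - θ k t)
        + (ε m * ωd m t - ((wlim t).re * Real.cos (θ m t) + (wlim t).im * Real.sin (θ m t)))
          * Real.sin (θ k t - θ n t)
        + (ε k * ωd k t - ((wlim t).re * Real.cos (θ k t) + (wlim t).im * Real.sin (θ k t)))
          * Real.sin (θ n t - θ m t) := by
    simp only [Real.sin_sub]; ring
  rw [e]
  refine (abs_add_three _ _ _).trans ?_
  linarith [hb n hn (θ m t - θ k t), hb m hm (θ k t - θ n t), hb k hk (θ n t - θ m t)]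


end Averaging

/-- Averaging lemma for the fast rotation: if `ε_n → 0`, `ε_n ω_n ⇀* ρ̄` in
`W^{1,∞}(0,T)`, `w_n → w` in `L^∞(0,T;ℂ)`, and
`ε_n ω_n'(t) = Re[w_n(t) e^{−iθ_n(t)}]` on `(0,T)` with `θ_n(t) = ∫₀ᵗ ω_n`,
then `ρ̄` is constant on `[0,T]`. -/
theorem averaging_fast_phase
    (T : ℝ) (hT : 0 < T)
    (ε : ℕ → ℝ) (hε : ∀ n, 0 < ε n) (hε0 : Filter.Tendsto ε Filter.atTop (nhds 0))
    (ωf ωd : ℕ → ℝ → ℝ)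
    (hωd : ∀ n t, HasDerivAt (ωf n) (ωd n t) t)
    (ρ ρd : ℝ → ℝ) (hρ : ∀ t, HasDerivAt ρ (ρd t) t)
    -- uniform bound (part of weak-* convergence in W^{1,∞})
    (hbdd : ∃ C : ℝ, ∀ n, ∀ t ∈ Set.Icc 0 T,
      |ε n * ωf n t| ≤ C ∧ |ε n * ωd n t| ≤ C)
    -- weak-* convergence of ε_n ω_n in W^{1,∞}(0,T): functions and derivatives
    (hwstar : ∀ g : ℝ → ℝ, Continuous g →
      Filter.Tendsto (fun n => ∫ t in (0:ℝ)..T, g t * (ε n * ωf n t))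
          Filter.atTop (nhds (∫ t in (0:ℝ)..T, g t * ρ t)) ∧
      Filter.Tendsto (fun n => ∫ t in (0:ℝ)..T, g t * (ε n * ωd n t))
          Filter.atTop (nhds (∫ t in (0:ℝ)..T, g t * ρd t)))
    (w : ℕ → ℝ → ℂ) (wlim : ℝ → ℂ)
    (hw : TendstoUniformlyOn w wlim Filter.atTop (Set.Icc 0 T))
    (θ : ℕ → ℝ → ℝ) (hθ : ∀ n t, θ n t = ∫ s in (0:ℝ)..t, ωf n s)
    (hODE : ∀ n, ∀ t ∈ Set.Ioo (0:ℝ) T,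
      ε n * ωd n t = (w n t * Complex.exp (-Complex.I * (θ n t : ℂ))).re) :
    ∀ t ∈ Set.Icc (0:ℝ) T, ρ t = ρ 0 := by
  obtain ⟨C, hC⟩ := hbdd
  have hωc : ∀ n, Continuous (ωf n) := fun n =>
    continuous_iff_continuousAt.2 fun t => (hωd n t).continuousAt
  have hρc : Continuous ρ := continuous_iff_continuousAt.2 fun t => (hρ t).continuousAt
  have hθd : ∀ n t, HasDerivAt (θ n) (ωf n t) t := fun n t => by
    rw [funext (hθ n)]
    exact ((hωc n).integral_hasStrictDerivAt 0 t).hasDerivAt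
  have hL : ∀ n, ∀ s ∈ Set.Icc 0 T, ∀ t ∈ Set.Icc 0 T,
      |ε n * ωf n t - ε n * ωf n s| ≤ C * |t - s| := fun n s hs t ht =>
    Convex.norm_image_sub_le_of_norm_hasDerivWithin_le
      (fun x _ => ((hωd n x).const_mul (ε n)).hasDerivWithinAt)
      (fun x hx => (hC n x hx).2) (convex_Icc 0 T) hs ht
  have hlim : ∀ t ∈ Set.Icc 0 T,
      Filter.Tendsto (fun n => ε n * ωf n t) Filter.atTop (nhds (ρ t)) := fun t ht =>
    tendsto_of_weak_of_lipschitz hT (v := fun n t => ε n * ωf n t)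
      (fun n => continuous_const.mul (hωc n)) hρc hL (fun g hg => (hwstar g hg).1) ht
  have hC0 : 0 ≤ C := (abs_nonneg _).trans (hC 0 0 ⟨le_rfl, hT.le⟩).1
  have hρC : ∀ t ∈ Set.Icc 0 T, |ρ t| ≤ C := fun t ht =>
    le_of_tendsto' (hlim t ht).abs fun n => (hC n t ht).1
  have hρL : ∀ s ∈ Set.Icc 0 T, ∀ t ∈ Set.Icc 0 T, |ρ t - ρ s| ≤ C * |t - s| :=
    fun s hs t ht => le_of_tendsto' ((hlim t ht).sub (hlim s hs)).abs fun n => hL n s hs t ht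
  have hρdC : ∀ t ∈ Set.Ioo 0 T, |ρd t| ≤ C := fun t ht =>
    (hρ t).le_of_lip' hC0 (by
      filter_upwards [Ioo_mem_nhds ht.1 ht.2] with x hx
      exact hρL t (Set.Ioo_subset_Icc_self ht) x (Set.Ioo_subset_Icc_self hx))
  -- at an interior point where the limit frequency is nonzero, its derivative vanishes
  have hloc : ∀ s ∈ Set.Ioo 0 T, ρ s ≠ 0 → ρd s = 0 := by
    intro s hs hne
    have hpos : 0 < |ρ s| := abs_pos.2 hne
    obtain ⟨r, hr, hr0, hrT, hrC⟩ : ∃ r > 0, 0 < s - r ∧ s + r < T ∧ C * r ≤ |ρ s| / 4 := by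
      have h1 : 0 < s := hs.1
      have h2 : 0 < T - s := sub_pos.2 hs.2
      have h3 : 0 < |ρ s| / (4 * (C + 1)) := by positivity
      refine ⟨min (min (s / 2) ((T - s) / 2)) (|ρ s| / (4 * (C + 1))),
        by positivity, ?_, ?_, ?_⟩
      · linarith [(min_le_left (min (s / 2) ((T - s) / 2)) (|ρ s| / (4 * (C + 1)))).trans
          (min_le_left _ _)]
      · linarith [(min_le_left (min (s / 2) ((T - s) / 2)) (|ρ s| / (4 * (C + 1)))).trans
          (min_le_right _ _)]
      · refine (mul_le_mul_of_nonneg_left (min_le_right _ _) hC0).trans ?_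
        rw [mul_div_assoc', div_le_div_iff₀ (by positivity) (by positivity)]
        nlinarith
    have hab : s - r ≤ s + r := by linarith
    have hsub : Set.Icc (s - r) (s + r) ⊆ Set.Ioo 0 T := fun t ht =>
      ⟨hr0.trans_le ht.1, ht.2.trans_lt hrT⟩
    have hsub' : Set.Icc (s - r) (s + r) ⊆ Set.Icc 0 T :=
      hsub.trans Set.Ioo_subset_Icc_self
    have hs' : s ∈ Set.Icc 0 T := Set.Ioo_subset_Icc_self hs
    -- `|ρ s| / 2` remains of `|ρ s|` after losing a quarter to `C * r` and a quarter to the limit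
    have hlow : ∀ᶠ n in Filter.atTop, ∀ t ∈ Set.Icc (s - r) (s + r),
        |ρ s| / 2 ≤ |ε n * ωf n t| := by
      filter_upwards [Metric.tendsto_nhds.1 (hlim s hs') (|ρ s| / 4) (by positivity)]
        with n hn t ht
      rw [Real.dist_eq] at hn
      have h1 := hL n s hs' t (hsub' ht)
      have h2 : |t - s| ≤ r := abs_le.2 ⟨by linarith [ht.1], by linarith [ht.2]⟩
      have h3 := (h1.trans (mul_le_mul_of_nonneg_left h2 hC0)).trans hrC
      have h4 := abs_sub_abs_le_abs_sub (ε n * ωf n s) (ε n * ωf n t)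
      have h5 := abs_sub_abs_le_abs_sub (ρ s) (ε n * ωf n s)
      rw [abs_sub_comm] at h4 h5
      linarith
    have hsq := integral_deriv_sq_eq_zero hab hε hε0 (A := |ρ s| / 2) (by positivity) hθd hωd
      hlow (fun n t ht => hC n t (hsub' ht)) hρ
      (fun t ht => ⟨hρC t (hsub' ht), hρdC t (hsub ht)⟩) (fun t ht => hlim t (hsub' ht))
      (fun η hη => triple_relation (hw.mono hsub') (fun n t ht => hODE n t (hsub ht)) hη)
    have iρ : IntervalIntegrable ρd volume (s - r) (s + r) :=
      intervalIntegrable_deriv_of_bdd hab (fun t _ => hρ t) fun t ht => hρdC t (hsub ht)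
    have iρ2 : IntervalIntegrable (fun t => ρd t ^ 2) volume (s - r) (s + r) := by
      simpa only [sq] using
        intervalIntegrable_mul_bdd hab iρ iρ fun t ht => hρdC t (hsub ht)
    have hae := (ae_restrict_iff' measurableSet_Ioc).1
      ((integral_eq_zero_iff_of_le_of_nonneg_ae hab
        (Filter.Eventually.of_forall fun t => sq_nonneg (ρd t)) iρ2).1 hsq)
    have hconst : ∀ x ∈ Set.Icc (s - r) (s + r), ρ x = ρ (s - r) := by
      intro x hx
      have h1 : ∫ t in (s - r)..x, ρd t = ρ x - ρ (s - r) :=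
        integral_eq_sub_of_hasDerivAt (fun t _ => hρ t)
          (iρ.mono_set (by
            rw [Set.uIcc_of_le hx.1, Set.uIcc_of_le hab]
            exact Set.Icc_subset_Icc_right hx.2))
      have h2 : ∫ t in (s - r)..x, ρd t = 0 := by
        refine intervalIntegral.integral_zero_ae ?_
        filter_upwards [hae] with t ht hmem
        rw [Set.uIoc_of_le hx.1] at hmem
        exact pow_eq_zero_iff two_ne_zero |>.1 (ht ⟨hmem.1, hmem.2.trans hx.2⟩)
      linarith
    refine (hρ s).unique ((hasDerivAt_const s (ρ (s - r))).congr_of_eventuallyEq ?_)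
    filter_upwards [Icc_mem_nhds (show s - r < s by linarith) (show s < s + r by linarith)]
      with x hx using hconst x hx
  -- hence `ρ ^ 2` is constant, so `ρ` either vanishes identically or never
  have hsqc : ∀ t ∈ Set.Icc 0 T, ρ t ^ 2 = ρ 0 ^ 2 := by
    intro t ht
    rcases ht.1.eq_or_lt with rfl | h0
    · rfl
    obtain ⟨c, hc, hc'⟩ := exists_hasDerivAt_eq_slope (fun t => ρ t ^ 2)
      (fun t => 2 * ρ t * ρd t) h0 (hρc.pow 2).continuousOn
      (fun x _ => by simpa using (hρ x).fun_pow 2)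
    have hz : 2 * ρ c * ρd c = 0 := by
      by_cases h : ρ c = 0
      · simp [h]
      · simp [hloc c ⟨hc.1, hc.2.trans_le ht.2⟩ h]
    rw [hz, eq_comm, div_eq_zero_iff] at hc'
    rcases hc' with h | h <;> linarith
  intro t ht
  by_cases h00 : ρ 0 = 0
  · have := hsqc t ht
    rw [h00] at this ⊢
    simpa using this
  rcases ht.1.eq_or_lt with rfl | h0
  · rfl
  obtain ⟨c, hc, hc'⟩ := exists_hasDerivAt_eq_slope ρ ρd h0 hρc.continuousOn (fun x _ => hρ x)
  have hcT : c ∈ Set.Ioo 0 T := ⟨hc.1, hc.2.trans_le ht.2⟩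
  have hρc0 : ρ c ≠ 0 := by
    intro h
    have := hsqc c (Set.Ioo_subset_Icc_self hcT)
    rw [h] at this
    exact h00 (by simpa using this.symm)
  rw [hloc c hcT hρc0, eq_comm, div_eq_zero_iff] at hc'
  rcases hc' with h | h <;> linarith
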